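/- A generalised clause-set F is an unsatisfiable hitting clause-set if and only if for every partial assignment φ the clause-set φ*F is minimally unsatisfiable. -/

import Mathlib

set_option linter.unusedSectionVars false
set_option linter.unusedVariables false

open scoped Classical

namespace GCLS

variable {V α : Type} [DecidableEq V] [DecidableEq α]

/-- A finite "functional" set of (variable, value) pairs, with values inside the
given domains `D`; used both for clauses and for partial assignments. -/
def FinFn (D : V → Finset α) : Type :=
  { s : Finset (V × α) // (∀ p ∈ s, p.2 ∈ D p.1) ∧
      ∀ p ∈ s, ∀ q ∈ s, p.1 = q.1 → p = q }

variable {D : V → Finset α}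

instance : DecidableEq (FinFn D) :=
  fun a b => decidable_of_iff (a.1 = b.1) Subtype.ext_iff.symm

namespace FinFn

/-- The set of variables occurring. -/
def vars (s : FinFn D) : Finset V := s.1.image Prod.fst

/-- Restriction to the pairs whose variable lies in `W`. -/
def restrictVars (s : FinFn D) (W : Finset V) : FinFn D :=
  ⟨s.1.filter (fun p => p.1 ∈ W),
   fun p hp => s.2.1 p (Finset.mem_filter.mp hp).1,
   fun p hp q hq h =>
     s.2.2 p (Finset.mem_filter.mp hp).1 q (Finset.mem_filter.mp hq).1 h⟩

/-- Removal of a set of pairs. -/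
def sdiff (s : FinFn D) (t : Finset (V × α)) : FinFn D :=
  ⟨s.1 \ t,
   fun p hp => s.2.1 p (Finset.mem_sdiff.mp hp).1,
   fun p hp q hq h =>
     s.2.2 p (Finset.mem_sdiff.mp hp).1 q (Finset.mem_sdiff.mp hq).1 h⟩

end FinFn

/-- Clauses: finite sets of literals `(v,ε)` (meaning "v ≠ ε"), at most one literal
per variable, values inside the domains. -/
abbrev Clause (D : V → Finset α) := FinFn D

/-- Partial assignments: finitely many variables get values inside their domains. -/
abbrev PAssign (D : V → Finset α) := FinFn D

/-- `φ` satisfies the literal `(v,ε)` (i.e. "v ≠ ε"): `v` is assigned a value ≠ `ε`. -/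
def SatLit (φ : PAssign D) (l : V × α) : Prop :=
  ∃ ε, (l.1, ε) ∈ φ.1 ∧ ε ≠ l.2

/-- `φ` satisfies a clause iff it satisfies some literal of it. -/
def SatClause (φ : PAssign D) (C : Clause D) : Prop :=
  ∃ l ∈ C.1, SatLit φ l

/-- The clause obtained from `C` by deleting all literals falsified by `φ`. -/
def Clause.restrict (φ : PAssign D) (C : Clause D) : Clause D :=
  FinFn.sdiff C φ.1

/-- The operation `φ * F` on multi-clause-sets: remove all clauses satisfied by `φ`
and delete all falsified literals from the remaining clauses. -/
noncomputable def applyM (φ : PAssign D) (F : Multiset (Clause D)) : Multiset (Clause D) :=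
  (F.filter (fun C => ¬ SatClause φ C)).map (Clause.restrict φ)

/-- The operation `φ * F` on clause-sets (with contraction of equal clauses). -/
noncomputable def applyF (φ : PAssign D) (F : Finset (Clause D)) : Finset (Clause D) :=
  (F.filter (fun C => ¬ SatClause φ C)).image (Clause.restrict φ)

/-- Satisfiability: some partial assignment satisfies all clauses. -/
def Sat (F : Multiset (Clause D)) : Prop :=
  ∃ φ : PAssign D, applyM φ F = 0

/-- Minimal unsatisfiability of a clause-set. -/
def MinUnsat (F : Finset (Clause D)) : Prop :=
  ¬ Sat F.val ∧ ∀ F' ⊂ F, Sat F'.val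

/-- The variables of a multi-clause-set. -/
def mvars (F : Multiset (Clause D)) : Finset V := F.toFinset.sup FinFn.vars

/-- The deficiency `δ(F) = c(F) - Σ_{v ∈ var(F)} (|D_v| - 1)`. -/
def delta (F : Multiset (Clause D)) : ℤ :=
  (Multiset.card F : ℤ) - ∑ v ∈ mvars F, ((D v).card - 1 : ℤ)

lemma powerset_toFinset_nonempty (F : Multiset (Clause D)) :
    F.powerset.toFinset.Nonempty :=
  ⟨0, by simp⟩

/-- The maximal deficiency `δ*(F) = max {δ(F') : F' ≤ F}`. -/
noncomputable def deltaStar (F : Multiset (Clause D)) : ℤ :=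
  F.powerset.toFinset.sup' (powerset_toFinset_nonempty F) delta

/-- A tight sub-multi-clause-set: `F' ≤ F` with `δ(F') = δ*(F)`. -/
noncomputable def Tight (F F' : Multiset (Clause D)) : Prop :=
  F' ≤ F ∧ delta F' = deltaStar F

/-- `F` is matching satisfiable: the clause-variable graph `B(F)` has a matching
covering all clause-nodes.  Such a matching is encoded as a multiset `P` of pairs
(clause-occurrence, variable-node), where the variable-nodes `(v,k)`,
`k < |D v| - 1`, are the copies of the variable `v`; the matching covers each
clause-occurrence exactly once (`P.map Prod.fst = F`), uses pairwise distinct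
variable-nodes, and respects adjacency in `B(F)`. -/
def MatchingSat (F : Multiset (Clause D)) : Prop :=
  ∃ P : Multiset (Clause D × (V × ℕ)),
    P.map Prod.fst = F ∧ (P.map Prod.snd).Nodup ∧
    ∀ p ∈ P, p.2.1 ∈ FinFn.vars p.1 ∧ p.2.2 < (D p.2.1).card - 1

/-- The edge between clause `C` and the copies of variable `v` is retained in
`B_φ(F)`: the literal of `C` with variable `v` is satisfied by `φ`. -/
def EdgeSat (φ : PAssign D) (C : Clause D) (v : V) : Prop :=
  ∃ ε, (v, ε) ∈ C.1 ∧ SatLit φ (v, ε)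

/-- `φ` is matching-satisfying for `F`: `B_φ(F)` has a matching covering all
clause-nodes. -/
def MatchingSatisfying (φ : PAssign D) (F : Multiset (Clause D)) : Prop :=
  ∃ P : Multiset (Clause D × (V × ℕ)),
    P.map Prod.fst = F ∧ (P.map Prod.snd).Nodup ∧
    ∀ p ∈ P, p.2.2 < (D p.2.1).card - 1 ∧ EdgeSat φ p.1 p.2.1

/-- The maximum size of a matching in `B(F)`. -/
noncomputable def nu (F : Multiset (Clause D)) : ℕ :=
  sSup { k | ∃ P : Multiset (Clause D × (V × ℕ)),
    P.map Prod.fst ≤ F ∧ (P.map Prod.snd).Nodup ∧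
    (∀ p ∈ P, p.2.1 ∈ FinFn.vars p.1 ∧ p.2.2 < (D p.2.1).card - 1) ∧
    Multiset.card P = k }

/-- The maximum size of a matching in `B_φ(F)`. -/
noncomputable def nuSub (φ : PAssign D) (F : Multiset (Clause D)) : ℕ :=
  sSup { k | ∃ P : Multiset (Clause D × (V × ℕ)),
    P.map Prod.fst ≤ F ∧ (P.map Prod.snd).Nodup ∧
    (∀ p ∈ P, p.2.2 < (D p.2.1).card - 1 ∧ EdgeSat φ p.1 p.2.1) ∧
    Multiset.card P = k }

/-- `φ` is matching-maximum for `F`. -/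
noncomputable def MatchingMaximum (φ : PAssign D) (F : Multiset (Clause D)) : Prop :=
  nuSub φ F = nu F

/-- `φ` is an autarky for `F`: every clause touched by `φ` is satisfied by `φ`. -/
def IsAutarky (φ : PAssign D) (F : Multiset (Clause D)) : Prop :=
  ∀ C ∈ F, (FinFn.vars C ∩ FinFn.vars φ).Nonempty → SatClause φ C

/-- `F` is lean: it has no non-trivial autarky. -/
def IsLean (F : Multiset (Clause D)) : Prop :=
  ¬ ∃ φ : PAssign D, IsAutarky φ F ∧ (FinFn.vars φ ∩ mvars F).Nonempty

/-- The sub-multi-clause-set of clauses touched by the variables in `W`. -/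
noncomputable def touchedBy (F : Multiset (Clause D)) (W : Finset V) : Multiset (Clause D) :=
  F.filter (fun C => (FinFn.vars C ∩ W).Nonempty)

/-- The restriction `F[W]`: keep the clauses touching `W` and delete from them all
literals whose variable is not in `W`. -/
noncomputable def restrictTo (F : Multiset (Clause D)) (W : Finset V) : Multiset (Clause D) :=
  (touchedBy F W).map (fun C => FinFn.restrictVars C W)

/-- `φ` is a matching autarky for `F`: `φ` is matching-satisfying for the
sub-multi-clause-set of clauses touched by `φ`. -/
noncomputable def IsMatchingAutarky (φ : PAssign D) (F : Multiset (Clause D)) : Prop :=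
  MatchingSatisfying φ (touchedBy F (FinFn.vars φ))

/-- `F` is matching lean: no non-trivial matching autarky. -/
noncomputable def MatchingLean (F : Multiset (Clause D)) : Prop :=
  ¬ ∃ φ : PAssign D, IsMatchingAutarky φ F ∧ (FinFn.vars φ ∩ mvars F).Nonempty

lemma surp_nonempty {F : Multiset (Clause D)} (h : (mvars F).Nonempty) :
    ((mvars F).powerset.erase ∅).Nonempty := by
  obtain ⟨v, hv⟩ := h
  refine ⟨{v}, ?_⟩
  simp [Finset.mem_erase, Finset.singleton_subset_iff, hv]

/-- The surplus `surp(F) = min {δ(F[W]) : ∅ ≠ W ⊆ var(F)}` (and `0` if `var(F) = ∅`). -/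
noncomputable def surp (F : Multiset (Clause D)) : ℤ :=
  if h : (mvars F).Nonempty then
    ((mvars F).powerset.erase ∅).inf' (surp_nonempty h)
      (fun W => delta (restrictTo F W))
  else 0

/-- The number of occurrences of the literal `l` in `F`. -/
noncomputable def litCount (F : Multiset (Clause D)) (l : V × α) : ℕ :=
  Multiset.card (F.filter (fun C => l ∈ C.1))

/-- The number of occurrences `#_v(F)` of the variable `v` in `F`. -/
noncomputable def varCount (F : Multiset (Clause D)) (v : V) : ℕ :=
  ∑ ε ∈ D v, litCount F (v, ε)

/-- The partial assignment `⟨v → ε⟩`. -/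
def single (v : V) (ε : α) (hε : ε ∈ D v) : PAssign D :=
  ⟨{(v, ε)}, by
    refine ⟨?_, ?_⟩
    · intro p hp
      rw [Finset.mem_singleton] at hp
      subst hp; exact hε
    · intro p hp q hq _
      rw [Finset.mem_singleton] at hp hq
      subst hp; subst hq; rfl⟩

/-- Composition `φ ∘ ψ` of partial assignments: domain is the union of the domains,
`ψ` taking precedence. -/
def comp (φ ψ : PAssign D) : PAssign D :=
  ⟨ψ.1 ∪ φ.1.filter (fun p => p.1 ∉ FinFn.vars ψ), by
    constructor
    · intro p hp
      rcases Finset.mem_union.mp hp with h | h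
      · exact ψ.2.1 p h
      · exact φ.2.1 p (Finset.mem_filter.mp h).1
    · intro p hp q hq hpq
      rcases Finset.mem_union.mp hp with h1 | h1 <;>
        rcases Finset.mem_union.mp hq with h2 | h2
      · exact ψ.2.2 p h1 q h2 hpq
      · exact absurd (hpq ▸ Finset.mem_image_of_mem Prod.fst h1)
          (Finset.mem_filter.mp h2).2
      · exact absurd (hpq.symm ▸ Finset.mem_image_of_mem Prod.fst h2)
          (Finset.mem_filter.mp h1).2
      · exact φ.2.2 p (Finset.mem_filter.mp h1).1 q (Finset.mem_filter.mp h2).1 hpq⟩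

/-- Two clauses clash (in some variable). -/
def Clash (C C' : Clause D) : Prop :=
  ∃ v ε ε', (v, ε) ∈ C.1 ∧ (v, ε') ∈ C'.1 ∧ ε ≠ ε'

/-- The number of variables in which two clauses clash. -/
noncomputable def clashCount (C C' : Clause D) : ℕ :=
  ((FinFn.vars C).filter
    (fun v => ∃ ε ε', (v, ε) ∈ C.1 ∧ (v, ε') ∈ C'.1 ∧ ε ≠ ε')).card

/-- Hitting clause-sets: every two distinct clauses clash. -/
def Hitting (F : Finset (Clause D)) : Prop :=
  ∀ C ∈ F, ∀ C' ∈ F, C ≠ C' → Clash C C'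

/-- Boolean clauses over the boolean variables `V × α` (one boolean variable per
generalised literal; the value `false` gives the positive boolean literal). -/
abbrev BClause (V α : Type) :=
  Clause (fun _ : V × α => (Finset.univ : Finset Bool))

/-- The direct translation of a single clause: each literal `(v,ε)` is replaced by
the positive boolean literal of the boolean variable `(v,ε)`. -/
def dirClause (C : Clause D) : BClause V α :=
  ⟨C.1.image (fun p => (p, false)), by
    constructor
    · intro p _; exact Finset.mem_univ _
    · intro p hp q hq h
      simp only [Finset.mem_image] at hp hq
      obtain ⟨a, -, rfl⟩ := hp
      obtain ⟨b, -, rfl⟩ := hq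
      exact congrArg (fun x => (x, false)) h⟩

/-- The ALO-clause for a variable `v`: the negative boolean literals of the boolean
variables `(v,ε)` for `ε ∈ D v`. -/
def aloClause (D : V → Finset α) (v : V) : BClause V α :=
  ⟨(D v).image (fun ε => ((v, ε), true)), by
    constructor
    · intro p _; exact Finset.mem_univ _
    · intro p hp q hq h
      simp only [Finset.mem_image] at hp hq
      obtain ⟨a, -, rfl⟩ := hp
      obtain ⟨b, -, rfl⟩ := hq
      exact congrArg (fun x => (x, true)) h⟩

/-- The direct translation `Γ(F)`: the translated clauses together with the
ALO-clauses for all occurring variables. -/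
noncomputable def dirTrans (F : Finset (Clause D)) : Finset (BClause V α) :=
  F.image dirClause ∪ (mvars F.val).image (aloClause D)

lemma sat_iff_aux (F : Finset (Clause D)) :
    Sat F.val ↔ ∃ φ : PAssign D, ∀ C ∈ F, SatClause φ C := by
  unfold Sat applyM
  simp [Multiset.map_eq_zero, Multiset.filter_eq_nil]

lemma hitting_minUnsat_aux (F : Finset (Clause D)) (hu : ¬ Sat F.val) (hh : Hitting F) :
    MinUnsat F := by
  refine ⟨hu, fun F' hF' => ?_⟩
  have hsub := hF'.1
  obtain ⟨C, hC, hC'⟩ := Finset.exists_of_ssubset hF'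
  rw [sat_iff_aux]
  refine ⟨C, fun B hB => ?_⟩
  obtain ⟨v, ε, ε', h1, h2, h3⟩ := hh C hC B (hsub hB) (fun h => hC' (h ▸ hB))
  exact ⟨(v, ε'), h2, ε, h1, h3⟩

lemma apply_unsat_aux (F : Finset (Clause D)) (hu : ¬ Sat F.val) (φ : PAssign D) :
    ¬ Sat (applyF φ F).val := by
  rw [sat_iff_aux] at hu ⊢
  rintro ⟨ψ, hψ⟩
  refine hu ⟨comp ψ φ, fun C hC => ?_⟩
  by_cases hs : SatClause φ C
  · obtain ⟨l, hl, ε, h1, h2⟩ := hs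
    exact ⟨l, hl, ε, Finset.mem_union_left _ h1, h2⟩
  · obtain ⟨l, hl, ε, h1, h2⟩ := hψ (Clause.restrict φ C)
      (Finset.mem_image_of_mem _ (Finset.mem_filter.mpr ⟨hC, hs⟩))
    obtain ⟨hlC, hlφ⟩ := Finset.mem_sdiff.mp hl
    refine ⟨l, hlC, ε, Finset.mem_union_right _ (Finset.mem_filter.mpr ⟨h1, ?_⟩), h2⟩
    intro hv
    obtain ⟨⟨w, δ⟩, hq, hqv⟩ := Finset.mem_image.mp hv
    obtain ⟨v, η⟩ := l
    simp only at hqv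
    subst hqv
    by_cases hd : δ = η
    · subst hd; exact hlφ hq
    · exact hs ⟨_, hlC, δ, hq, hd⟩

lemma apply_hitting_aux (F : Finset (Clause D)) (hh : Hitting F) (φ : PAssign D) :
    Hitting (applyF φ F) := by
  intro A hA B hB hAB
  obtain ⟨C, hC, rfl⟩ := Finset.mem_image.mp hA
  obtain ⟨C', hC', rfl⟩ := Finset.mem_image.mp hB
  obtain ⟨hC, hs⟩ := Finset.mem_filter.mp hC
  obtain ⟨hC', hs'⟩ := Finset.mem_filter.mp hC'
  obtain ⟨v, ε, ε', h1, h2, h3⟩ := hh C hC C' hC' (fun h => hAB (h ▸ rfl))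
  refine ⟨v, ε, ε', Finset.mem_sdiff.mpr ⟨h1, fun h => ?_⟩,
    Finset.mem_sdiff.mpr ⟨h2, fun h => ?_⟩, h3⟩
  · exact hs' ⟨_, h2, ε, h, h3⟩
  · exact hs ⟨_, h1, ε', h, h3.symm⟩

lemma sub_of_noclash_aux (F : Finset (Clause D))
    (h : ∀ φ : PAssign D, MinUnsat (applyF φ F)) (C C' : Clause D) (hC : C ∈ F)
    (hC' : C' ∈ F) (hn : ¬ Clash C C') : C.1 ⊆ C'.1 := by
  by_contra hsub
  have hs : ¬ SatClause C' C := by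
    rintro ⟨⟨v, ε⟩, h1, ε', h2, h3⟩
    exact hn ⟨v, ε, ε', h1, h2, fun e => h3 e.symm⟩
  have hs' : ¬ SatClause C' C' := by
    rintro ⟨⟨v, ε⟩, h1, ε', h2, h3⟩
    exact h3 (congrArg Prod.snd (C'.2.2 _ h2 _ h1 rfl))
  have m : Clause.restrict C' C ∈ applyF C' F :=
    Finset.mem_image_of_mem _ (Finset.mem_filter.mpr ⟨hC, hs⟩)
  have m' : Clause.restrict C' C' ∈ applyF C' F :=
    Finset.mem_image_of_mem _ (Finset.mem_filter.mpr ⟨hC', hs'⟩)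
  have e' : (Clause.restrict C' C').1 = ∅ := Finset.sdiff_self _
  have ne : Clause.restrict C' C ≠ Clause.restrict C' C' := by
    intro e
    apply hsub
    rw [← Finset.sdiff_eq_empty_iff_subset]
    exact (congrArg Subtype.val e).trans e'
  have := (h C').2 ((applyF C' F).erase (Clause.restrict C' C)) (Finset.erase_ssubset m)
  rw [sat_iff_aux] at this
  obtain ⟨φ, hφ⟩ := this
  obtain ⟨l, hl, -⟩ := hφ _ (Finset.mem_erase.mpr ⟨ne.symm, m'⟩)
  rw [e'] at hl
  simp at hl

/-- `F` is an unsatisfiable hitting clause-set iff `φ * F` is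
minimally unsatisfiable for every partial assignment `φ`. -/
theorem unsat_hitting_iff_all_applications_minUnsat
    (hD : ∀ v, (D v).Nonempty) (F : Finset (Clause D)) :
    (¬ Sat F.val ∧ Hitting F) ↔
      ∀ φ : PAssign D, MinUnsat (applyF φ F) := by
  constructor
  · rintro ⟨hu, hh⟩ φ
    exact hitting_minUnsat_aux _ (apply_unsat_aux F hu φ) (apply_hitting_aux F hh φ)
  · intro h
    constructor
    · intro hs
      rw [sat_iff_aux] at hs
      obtain ⟨φ, hφ⟩ := hs
      refine (h φ).1 ((sat_iff_aux _).mpr ⟨φ, fun A hA => ?_⟩)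
      obtain ⟨C, hC, -⟩ := Finset.mem_image.mp hA
      obtain ⟨hC, hs⟩ := Finset.mem_filter.mp hC
      exact absurd (hφ C hC) hs
    · intro C hC C' hC' hne
      by_contra hn
      have hn' : ¬ Clash C' C := by
        rintro ⟨v, ε, ε', h1, h2, h3⟩
        exact hn ⟨v, ε', ε, h2, h1, h3.symm⟩
      exact hne (Subtype.ext (Finset.Subset.antisymm
        (sub_of_noclash_aux F h C C' hC hC' hn) (sub_of_noclash_aux F h C' C hC' hC hn')))

end GCLS
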